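/- Let ℓ = a^2 + 3a + 9 be a Shanks prime with parameter a, and let L be the splitting field over ℚ of f(x) = x^3 - a x^2 - (a+3) x - 1 (a cubic Galois extension of ℚ). Then the discriminant of the number field L equals ℓ^2. -/

import Mathlib

open Polynomial

/-!
Write `ℓ = a² + 3a + 9` and let `t` be a root of the Shanks polynomial `f`. The other roots are
polynomials in `t`, so `L = ℚ(t)`. The discriminant of `f` is `ℓ²`. If `ℓ` is squarefree, then it is
prime to `3`, so `3 m ≡ a (mod ℓ)` for some integer `m`. Completing the cube,
`27 f(m) = (3 m - a)³ - 3 ℓ (3 m - a) - (2 a + 3) ℓ`, shows that `f(X + m)` is Eisenstein at every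
prime dividing `ℓ`. Hence no such prime divides the index of `ℤ[t - m]` in the ring of integers,
and no other prime divides the discriminant: `ℤ[t - m]` is the full ring of integers.
-/

section PowerBasis

variable {K L : Type*} [Field K] [Field L] [Algebra K L] [Algebra.IsSeparable K L]

theorem norm_aeval_gen_eq_resultant_minpoly (pb : PowerBasis K L) {g : K[X]} {n : ℕ}
    (hn : g.natDegree ≤ n) :
    Algebra.norm K (aeval pb.gen g) =
      (minpoly K pb.gen).resultant g (minpoly K pb.gen).natDegree n := by
  classical
  have := pb.finite
  let E := AlgebraicClosure L
  have hmonic := (minpoly.monic pb.isIntegral_gen).map (algebraMap K E)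
  have hnodup : ((minpoly K pb.gen).aroots E).Nodup :=
    nodup_roots (Separable.map (Algebra.IsSeparable.isSeparable K pb.gen))
  apply (algebraMap K E).injective
  calc algebraMap K E (Algebra.norm K (aeval pb.gen g))
      = ∏ σ : L →ₐ[K] E, aeval (σ pb.gen) g := by
        simp only [Algebra.norm_eq_prod_embeddings, aeval_algHom_apply]
    _ = (((minpoly K pb.gen).aroots E).map fun x ↦ aeval x g).prod := by
        rw [Fintype.prod_equiv pb.liftEquiv' _ (fun x ↦ aeval (x : E) g) fun σ ↦ by simp,
          Finset.prod_mem_multiset _ _ (fun x ↦ aeval x g) fun _ ↦ rfl,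
          Finset.prod_eq_multiset_prod, Multiset.toFinset_val, hnodup.dedup]
    _ = algebraMap K E ((minpoly K pb.gen).resultant g (minpoly K pb.gen).natDegree n) := by
        rw [← resultant_map_map, ← natDegree_map (algebraMap K E),
          resultant_eq_prod_eval _ _ n (natDegree_map_le.trans hn) (IsAlgClosed.splits _),
          hmonic.leadingCoeff, one_pow, one_mul]
        simp only [eval_map_algebraMap]

theorem discr_basis_eq_discr_minpoly (pb : PowerBasis K L) :
    Algebra.discr K pb.basis = (minpoly K pb.gen).discr := by
  have := pb.finite
  rw [Algebra.discr_powerBasis_eq_norm, norm_aeval_gen_eq_resultant_minpoly pb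
    (natDegree_derivative_le _), resultant_deriv (minpoly.degree_pos pb.isIntegral_gen),
    minpoly.monic pb.isIntegral_gen, pb.finrank, pb.natDegree_minpoly, mul_one, ← mul_assoc,
    ← mul_pow, neg_one_mul, neg_neg, one_pow, one_mul]

end PowerBasis

theorem discr_map_of_monic {R S : Type*} [CommRing R] [CommRing S] (φ : R →+* S) {f : R[X]}
    (hf : f.Monic) : (f.map φ).discr = φ f.discr := by
  nontriviality S
  have := φ.domain_nontrivial
  rcases eq_or_ne f.natDegree 0 with h0 | h0
  · rw [hf.natDegree_eq_zero.mp h0, Polynomial.map_one, ← C_1, ← C_1, discr_C, discr_C, map_one]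
  have hdeg : 0 < f.degree := natDegree_pos_iff_degree_pos.mp (Nat.pos_of_ne_zero h0)
  have hres := resultant_deriv (f := f.map φ) (by rwa [hf.degree_map])
  rw [derivative_map, hf.natDegree_map, resultant_map_map, resultant_deriv hdeg, hf.leadingCoeff,
    (hf.map φ).leadingCoeff, mul_one, mul_one, map_mul, map_pow, map_neg, map_one] at hres
  exact ((isUnit_one.neg.pow _).mul_left_cancel hres).symm

theorem mem_adjoin_of_smul_mem_adjoin_of_isEisensteinAt {R K L : Type*} [CommRing R] [IsDomain R]
    [UniqueFactorizationMonoid R] [Field K] [Algebra R K] [IsFractionRing R K] [Field L]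
    [Algebra K L] [Algebra R L] [IsScalarTower R K L]
    {B : PowerBasis K L} (hB : IsIntegral R B.gen) {d : R} (hd : d ≠ 0)
    (hE : ∀ p, Prime p → p ∣ d → (minpoly R B.gen).IsEisensteinAt (Ideal.span {p}))
    {z : L} (hz : IsIntegral R z) (hdz : d • z ∈ Algebra.adjoin R {B.gen}) :
    z ∈ Algebra.adjoin R {B.gen} := by
  induction d using UniqueFactorizationMonoid.induction_on_prime with
  | h₁ => exact absurd rfl hd
  | h₂ u hu =>
    obtain ⟨u, rfl⟩ := hu
    simpa [Units.smul_def, smul_smul] using Subalgebra.smul_mem _ hdz (↑u⁻¹ : R)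
  | h₃ d p _ hp ih =>
    refine ih (right_ne_zero_of_mul hd) (fun q hq hqd ↦ hE q hq (hqd.mul_left p)) ?_
    rw [mul_smul] at hdz
    exact mem_adjoin_of_smul_prime_smul_of_minpoly_isEisensteinAt hp hB (hz.smul d) hdz
      (hE p hp (dvd_mul_right p d))

theorem isIntegral_repr_of_mem_adjoin_gen {R F S : Type*} [CommRing R] [Field F] [CommRing S]
    [Algebra R F] [Algebra F S] [Algebra R S] [IsScalarTower R F S] {B : PowerBasis F S}
    (hB : IsIntegral R B.gen) (hmin : minpoly F B.gen = (minpoly R B.gen).map (algebraMap R F))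
    {z : S} (hz : z ∈ Algebra.adjoin R {B.gen}) (i : Fin B.dim) :
    IsIntegral R (B.basis.repr z i) := by
  rw [Algebra.adjoin_singleton_eq_range_aeval] at hz
  obtain ⟨P, rfl⟩ := hz
  change IsIntegral R (B.basis.repr (aeval B.gen P) i)
  rw [aeval_eq_sum_range, map_sum, Finsupp.finsetSum_apply]
  refine IsIntegral.sum _ fun n _ ↦ ?_
  rw [← algebraMap_smul F, map_smul, Finsupp.smul_apply, algebraMap_smul]
  exact (PowerBasis.repr_gen_pow_isIntegral hB hmin n i).smul _

section NumberField

open NumberField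

variable {K : Type*} [Field K] [NumberField K]

theorem discr_eq_discr_minpoly_of_forall_mem_adjoin {B : PowerBasis ℚ K}
    (hB : IsIntegral ℤ B.gen) (hmem : ∀ z : K, IsIntegral ℤ z → z ∈ Algebra.adjoin ℤ {B.gen}) :
    NumberField.discr K = (minpoly ℤ B.gen).discr := by
  have hmin := minpoly.isIntegrallyClosed_eq_field_fractions' ℚ hB
  have hbasis : Algebra.discr ℚ (integralBasis K) = Algebra.discr ℚ B.basis := by
    refine Algebra.discr_eq_discr_of_toMatrix_coeff_isIntegral K (fun i j ↦ ?_) fun i j ↦ ?_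
    · rw [Module.Basis.toMatrix_apply, B.basis_eq_pow]
      obtain ⟨y, hy⟩ := (IsIntegralClosure.isIntegral_iff (A := 𝓞 K)).mp (hB.pow (j : ℕ))
      rw [← hy, integralBasis_repr_apply]
      exact isIntegral_algebraMap
    · rw [Module.Basis.toMatrix_apply, integralBasis_apply]
      exact isIntegral_repr_of_mem_adjoin_gen hB hmin (hmem _ (RingOfIntegers.isIntegral_coe _)) i
  apply (algebraMap ℤ ℚ).injective_int
  rw [← discr_map_of_monic _ (minpoly.monic hB), ← hmin, ← discr_basis_eq_discr_minpoly, ← hbasis]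
  exact NumberField.coe_discr K

theorem discr_eq_discr_minpoly_of_isEisensteinAt {B : PowerBasis ℚ K} (hB : IsIntegral ℤ B.gen)
    (hE : ∀ p, Prime p → p ∣ (minpoly ℤ B.gen).discr →
      (minpoly ℤ B.gen).IsEisensteinAt (Ideal.span {p})) :
    NumberField.discr K = (minpoly ℤ B.gen).discr := by
  have hdiscr : Algebra.discr ℚ B.basis = algebraMap ℤ ℚ (minpoly ℤ B.gen).discr := by
    rw [discr_basis_eq_discr_minpoly, minpoly.isIntegrallyClosed_eq_field_fractions' ℚ hB,
      discr_map_of_monic _ (minpoly.monic hB)]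
  have hne : (minpoly ℤ B.gen).discr ≠ 0 := by
    intro h
    apply Algebra.discr_not_zero_of_basis ℚ B.basis
    rw [hdiscr, h, map_zero]
  refine discr_eq_discr_minpoly_of_forall_mem_adjoin hB fun z hz ↦
    mem_adjoin_of_smul_mem_adjoin_of_isEisensteinAt (K := ℚ) hB hne hE hz ?_
  rw [← algebraMap_smul ℚ, ← hdiscr]
  exact Algebra.discr_mul_isIntegral_mem_adjoin ℚ hB hz

theorem discr_eq_discr_of_isEisensteinAt {f : ℤ[X]} (hf : f.Monic) (hirr : Irreducible f)
    (hE : ∀ p, Prime p → p ∣ f.discr → f.IsEisensteinAt (Ideal.span {p}))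
    {x : K} (hx : aeval x f = 0) (htop : Algebra.adjoin ℚ {x} = ⊤) :
    NumberField.discr K = f.discr := by
  have hint : IsIntegral ℤ x := ⟨f, hf, hx⟩
  let B : PowerBasis ℚ K := PowerBasis.ofAdjoinEqTop (.of_finite ℚ x) htop
  have hgen : B.gen = x := PowerBasis.ofAdjoinEqTop_gen _ htop
  have hmin : minpoly ℤ B.gen = f := hgen ▸
    eq_of_monic_of_associated (minpoly.monic hint) hf <|
      (minpoly.prime_of_isIntegrallyClosed hint).irreducible.associated_of_dvd hirr
        (minpoly.isIntegrallyClosed_dvd hint hx)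
  rw [← hmin] at hE ⊢
  exact discr_eq_discr_minpoly_of_isEisensteinAt (hgen ▸ hint) hE

end NumberField

theorem adjoin_singleton_sub_algebraMap {R A : Type*} [CommRing R] [Ring A] [Algebra R A]
    (x : A) (r : R) : Algebra.adjoin R {x - algebraMap R A r} = Algebra.adjoin R {x} := by
  refine le_antisymm (Algebra.adjoin_singleton_le ?_) (Algebra.adjoin_singleton_le ?_)
  · exact sub_mem (Algebra.self_mem_adjoin_singleton R x) (Subalgebra.algebraMap_mem _ r)
  · simpa only [sub_add_cancel] using
      add_mem (Algebra.self_mem_adjoin_singleton R (x - algebraMap R A r))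
        (Subalgebra.algebraMap_mem _ r)

section ShanksPolynomial

/-- The simplest cubic of Shanks with parameter `a`, over an arbitrary commutative ring. -/
noncomputable def shanksPolynomial {R : Type*} [CommRing R] (a : R) : R[X] :=
  X ^ 3 - C a * X ^ 2 - C (a + 3) * X - 1

theorem map_shanksPolynomial {R S : Type*} [CommRing R] [CommRing S] (φ : R →+* S) (a : R) :
    (shanksPolynomial a).map φ = shanksPolynomial (φ a) := by
  simp only [shanksPolynomial, Polynomial.map_sub, Polynomial.map_mul, Polynomial.map_pow, map_X,
    map_C, map_add, C_ofNat, Polynomial.map_add, Polynomial.map_ofNat, Polynomial.map_one]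

section CommRing

variable {R : Type*} [CommRing R]

theorem monic_shanksPolynomial (a : R) : (shanksPolynomial a).Monic := by
  rw [shanksPolynomial]
  monicity!

theorem natDegree_shanksPolynomial [Nontrivial R] (a : R) : (shanksPolynomial a).natDegree = 3 := by
  rw [shanksPolynomial]
  compute_degree!

theorem eval_shanksPolynomial (a m : R) :
    (shanksPolynomial a).eval m = m ^ 3 - a * m ^ 2 - (a + 3) * m - 1 := by
  simp only [shanksPolynomial, eval_sub, eval_mul, eval_pow, eval_X, eval_C, eval_one]

theorem twentyseven_mul_eval_shanksPolynomial (a m : R) :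
    3 ^ 3 * (shanksPolynomial a).eval m = (3 * m - a) ^ 3 -
      3 * (a ^ 2 + 3 * a + 9) * (3 * m - a) - (2 * a + 3) * (a ^ 2 + 3 * a + 9) := by
  rw [eval_shanksPolynomial]
  ring

/- The other two roots are `-(1 + t) / t` and `-1 / (1 + t)`, written as polynomials in `t`. -/
theorem shanksPolynomial_eq_mul_of_isRoot {a t : R} (ht : (shanksPolynomial a).IsRoot t) :
    shanksPolynomial a =
      (X - C t) * (X - C (a + 2 + a * t - t ^ 2)) * (X - C (t ^ 2 - (a + 1) * t - 2)) := by
  have hC := congrArg C ((eval_shanksPolynomial a t).symm.trans ht)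
  simp only [shanksPolynomial, C_add, C_sub, C_mul, C_pow, C_1, C_0, C_ofNat] at hC ⊢
  linear_combination (-(C a + 1 - C t) * X + C t * (C a + 1 - C t) + 1) * hC

theorem taylor_shanksPolynomial (m a : R) :
    taylor m (shanksPolynomial a) = (Cubic.mk 1 (3 * m - a) (3 * m ^ 2 - 2 * a * m - (a + 3))
      (m ^ 3 - a * m ^ 2 - (a + 3) * m - 1)).toPoly := by
  simp only [taylor_apply, shanksPolynomial, Cubic.toPoly, sub_comp, add_comp, mul_comp,
    X_pow_comp, C_comp, X_comp, one_comp, C_add, C_sub, C_mul, C_pow, C_1, C_ofNat, ofNat_comp]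
  ring

theorem discr_taylor_shanksPolynomial [Nontrivial R] (m a : R) :
    (taylor m (shanksPolynomial a)).discr = (a ^ 2 + 3 * a + 9) ^ 2 := by
  rw [taylor_shanksPolynomial,
    discr_of_degree_eq_three (Cubic.degree_of_a_ne_zero one_ne_zero)]
  simp only [Cubic.coeff_eq_a, Cubic.coeff_eq_b, Cubic.coeff_eq_c, Cubic.coeff_eq_d]
  ring

end CommRing

section Divisibility

variable {R : Type*} [CommRing R] {a m p : R}

theorem not_dvd_three_of_not_sq_dvd (hp : Prime p) (h : p ∣ a ^ 2 + 3 * a + 9)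
    (h2 : ¬ p ^ 2 ∣ a ^ 2 + 3 * a + 9) : ¬ p ∣ 3 := by
  intro h3
  have ha : p ∣ a ^ 2 := by
    convert! dvd_sub h (h3.mul_right (a + 3)) using 1
    ring
  obtain ⟨b, rfl⟩ := hp.dvd_of_dvd_pow ha
  obtain ⟨k, hk⟩ := h3
  exact h2 ⟨b ^ 2 + k * b + k ^ 2, by linear_combination (p * b + 3 + p * k) * hk⟩

theorem not_sq_dvd_eval_shanksPolynomial [IsDomain R] (hp : Prime p) (h : p ∣ a ^ 2 + 3 * a + 9)
    (h2 : ¬ p ^ 2 ∣ a ^ 2 + 3 * a + 9) (hm : p ∣ 3 * m - a) :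
    ¬ p ^ 2 ∣ (shanksPolynomial a).eval m := by
  intro hdvd
  have hp3 := not_dvd_three_of_not_sq_dvd hp h h2
  have hp23 : ¬ p ∣ 2 * a + 3 := by
    intro h23
    have h27 : p ∣ 3 ^ 3 := by
      convert! dvd_sub (h.mul_left 4) (h23.mul_left (2 * a + 3)) using 1
      ring
    exact hp3 (hp.dvd_of_dvd_pow h27)
  refine h2 (hp.pow_dvd_of_dvd_mul_left 2 hp23 ?_)
  have hsum : (2 * a + 3) * (a ^ 2 + 3 * a + 9) = (3 * m - a) ^ 3 -
      3 * ((a ^ 2 + 3 * a + 9) * (3 * m - a)) - 3 ^ 3 * (shanksPolynomial a).eval m := by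
    rw [twentyseven_mul_eval_shanksPolynomial]
    ring
  rw [hsum]
  have hcube : p ^ 2 ∣ (3 * m - a) ^ 3 := (pow_dvd_pow_of_dvd hm 2).trans (pow_dvd_pow _ (by lia))
  have hmul : p ^ 2 ∣ (a ^ 2 + 3 * a + 9) * (3 * m - a) := sq p ▸ mul_dvd_mul h hm
  exact dvd_sub (dvd_sub hcube (hmul.mul_left 3)) (hdvd.mul_left _)

theorem isEisensteinAt_taylor_shanksPolynomial [IsDomain R] (hp : Prime p)
    (h : p ∣ a ^ 2 + 3 * a + 9) (h2 : ¬ p ^ 2 ∣ a ^ 2 + 3 * a + 9) (hm : p ∣ 3 * m - a) :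
    (taylor m (shanksPolynomial a)).IsEisensteinAt (Ideal.span {p}) := by
  have hmonic : (taylor m (shanksPolynomial a)).Monic :=
    (leadingCoeff_taylor _ _).trans (monic_shanksPolynomial a)
  have hp3 := not_dvd_three_of_not_sq_dvd hp h h2
  have hlinear : p ∣ 3 * m ^ 2 - 2 * a * m - (a + 3) := by
    refine (hp.dvd_mul.mp ?_).resolve_left hp3
    convert! dvd_sub (hm.mul_left (3 * m - a)) h using 1
    ring
  have hconst : p ∣ m ^ 3 - a * m ^ 2 - (a + 3) * m - 1 := by
    rw [← eval_shanksPolynomial]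
    have hp27 : ¬ p ∣ 3 ^ 3 := fun h27 ↦ hp3 (hp.dvd_of_dvd_pow h27)
    refine (hp.dvd_mul.mp ?_).resolve_left hp27
    rw [twentyseven_mul_eval_shanksPolynomial]
    exact dvd_sub (dvd_sub (dvd_pow hm three_ne_zero) (hm.mul_left _)) (h.mul_left _)
  refine hmonic.isEisensteinAt_of_mem_of_notMem
    (Ideal.span_singleton_ne_top hp.not_isUnit) (fun {n} hn ↦ ?_) ?_
  · rw [taylor_shanksPolynomial] at hn ⊢
    rw [Cubic.natDegree_of_a_ne_zero one_ne_zero] at hn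
    rw [Ideal.mem_span_singleton]
    interval_cases n
    · simpa only [Cubic.coeff_eq_d] using hconst
    · simpa only [Cubic.coeff_eq_c] using hlinear
    · simpa only [Cubic.coeff_eq_b] using hm
  · rw [taylor_coeff_zero, Ideal.span_singleton_pow, Ideal.mem_span_singleton]
    exact not_sq_dvd_eval_shanksPolynomial hp h h2 hm

end Divisibility

theorem adjoin_root_shanksPolynomial_eq_top {K L : Type*} [Field K] [Field L] [Algebra K L] {a : K}
    (hL : IsSplittingField K L (shanksPolynomial a)) {t : L}
    (ht : aeval t (shanksPolynomial a) = 0) : Algebra.adjoin K {t} = ⊤ := by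
  have ht_mem := Algebra.self_mem_adjoin_singleton K t
  rw [← top_le_iff, ← hL.adjoin_rootSet', Algebra.adjoin_le_iff]
  intro x hx
  have hx0 := aeval_eq_zero_of_mem_rootSet hx
  have hroot : (shanksPolynomial (algebraMap K L a)).IsRoot t := by
    rwa [IsRoot, ← map_shanksPolynomial, eval_map_algebraMap]
  rw [← eval_map_algebraMap, map_shanksPolynomial, shanksPolynomial_eq_mul_of_isRoot hroot] at hx0
  simp only [eval_mul, eval_sub, eval_X, eval_C, mul_eq_zero, sub_eq_zero] at hx0
  rcases hx0 with (rfl | rfl) | rfl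
  · exact ht_mem
  · have ha := Subalgebra.algebraMap_mem (Algebra.adjoin K {t}) a
    exact sub_mem (add_mem (add_mem ha (ofNat_mem _ 2)) (mul_mem ha ht_mem)) (pow_mem ht_mem 2)
  · have ha := Subalgebra.algebraMap_mem (Algebra.adjoin K {t}) a
    exact sub_mem (sub_mem (pow_mem ht_mem 2) (mul_mem (add_mem ha (one_mem _)) ht_mem))
      (ofNat_mem _ 2)

theorem exists_dvd_three_mul_sub_of_squarefree {a : ℤ} (hℓ : Squarefree (a ^ 2 + 3 * a + 9)) :
    ∃ m : ℤ, a ^ 2 + 3 * a + 9 ∣ 3 * m - a := by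
  have h3 : ¬ (3 : ℤ) ∣ a ^ 2 + 3 * a + 9 := fun h ↦
    not_dvd_three_of_not_sq_dvd Int.prime_three h
      (fun h2 ↦ Int.prime_three.not_isUnit (hℓ 3 (sq (3 : ℤ) ▸ h2))) dvd_rfl
  obtain ⟨u, v, huv⟩ := Int.prime_three.coprime_iff_not_dvd.mpr h3
  exact ⟨u * a, -(v * a), by linear_combination a * huv⟩

theorem irreducible_shanksPolynomial (a : ℤ) : Irreducible (shanksPolynomial a) := by
  have hmonic := monic_shanksPolynomial a
  have hdeg := natDegree_shanksPolynomial a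
  rw [hmonic.irreducible_iff_roots_eq_zero_of_degree_le_three (by rw [hdeg]; norm_num) hdeg.le,
    Multiset.eq_zero_iff_forall_notMem]
  intro n hn
  have hmod2 : ∀ a n : ZMod 2, n ^ 3 - a * n ^ 2 - (a + 3) * n - 1 ≠ 0 := by decide
  have hroot : n ^ 3 - a * n ^ 2 - (a + 3) * n - 1 = 0 :=
    (eval_shanksPolynomial a n).symm.trans (isRoot_of_mem_roots hn)
  exact hmod2 a n (mod_cast congrArg (Int.cast : ℤ → ZMod 2) hroot)

theorem discr_of_adjoin_root_shanksPolynomial_eq_top {K : Type*} [Field K] [NumberField K] {a : ℤ}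
    (hℓ : Squarefree (a ^ 2 + 3 * a + 9)) {t : K} (ht : aeval t (shanksPolynomial a) = 0)
    (htop : Algebra.adjoin ℚ {t} = ⊤) : NumberField.discr K = (a ^ 2 + 3 * a + 9) ^ 2 := by
  obtain ⟨m, hm⟩ := exists_dvd_three_mul_sub_of_squarefree hℓ
  have hroot : aeval (t - algebraMap ℚ K m) (taylor m (shanksPolynomial a)) = 0 := by
    simpa [taylor_apply, aeval_comp] using ht
  rw [← adjoin_singleton_sub_algebraMap t (m : ℚ)] at htop
  have hdiscr := discr_taylor_shanksPolynomial m a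
  rw [← hdiscr]
  refine discr_eq_discr_of_isEisensteinAt
    ((leadingCoeff_taylor _ _).trans (monic_shanksPolynomial a))
    ((MulEquiv.irreducible_iff (taylorEquiv m)).mpr (irreducible_shanksPolynomial a))
    (fun p hp hdvd ↦ ?_) hroot htop
  have hpℓ : p ∣ a ^ 2 + 3 * a + 9 := hp.dvd_of_dvd_pow (hdiscr ▸ hdvd)
  exact isEisensteinAt_taylor_shanksPolynomial hp hpℓ
    (fun h2 ↦ hp.not_isUnit (hℓ p (sq p ▸ h2))) (hpℓ.trans hm)

end ShanksPolynomial

theorem discr_of_shanks_splitting_field_general (a : ℤ) (hℓ : Squarefree (a ^ 2 + 3 * a + 9))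
    (L : Type*) [Field L] [NumberField L]
    (hL : IsSplittingField ℚ L (shanksPolynomial (a : ℚ))) :
    NumberField.discr L = (a ^ 2 + 3 * a + 9) ^ 2 := by
  have hmap : (shanksPolynomial a).map (algebraMap ℤ ℚ) = shanksPolynomial (a : ℚ) :=
    map_shanksPolynomial _ a
  have hdeg : ((shanksPolynomial (a : ℚ)).map (algebraMap ℚ L)).degree ≠ 0 := by
    rw [degree_map]
    exact degree_ne_of_natDegree_ne (by rw [natDegree_shanksPolynomial]; decide)
  obtain ⟨t, ht⟩ := hL.splits'.exists_eval_eq_zero hdeg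
  rw [eval_map_algebraMap] at ht
  refine discr_of_adjoin_root_shanksPolynomial_eq_top hℓ ?_
    (adjoin_root_shanksPolynomial_eq_top hL ht)
  rwa [← aeval_map_algebraMap ℚ, hmap]

/-- Let `ℓ = a^2 + 3a + 9` be a Shanks prime with parameter `a ≥ -1`, and let `L` be the
splitting field over `ℚ` of `f(x) = x^3 - a x^2 - (a+3) x - 1`.  Then the discriminant of
the number field `L` equals `ℓ^2`. -/
theorem discr_of_shanks_splitting_field (a : ℤ) (ha : -1 ≤ a)
    (hℓ : Prime (a ^ 2 + 3 * a + 9))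
    (L : Type) [Field L] [NumberField L]
    (hL : IsSplittingField ℚ L (X ^ 3 - C (a : ℚ) * X ^ 2 - C ((a : ℚ) + 3) * X - 1)) :
    NumberField.discr L = (a ^ 2 + 3 * a + 9) ^ 2 :=
  discr_of_shanks_splitting_field_general a hℓ.squarefree L hL
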